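/- For every real t with 0 < t < 1, the improper integral ∫_{t}^{1} dx/√(x(1−x)(x−t)) converges and equals π·Σ_{n=0}^{∞} ((1/2)_n / n!)²·(1−t)ⁿ, that is, the elliptic integral over the cycle [t, 1] of the Legendre family equals π·₂F₁(1/2, 1/2, 1; 1−t). (This follows from the change of variable x ↦ 1 − (1−t)/x, which transforms this integral into the integral ∫_{1}^{∞} dx/√(x(x−1)(x−(1−t))).) -/

import Mathlib

/-- `a_n = ((1/2)_n / n!)²`, where `(1/2)_n` is the Pochhammer symbol. -/
noncomputable def aCoef (n : ℕ) : ℝ :=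
  ((ascPochhammer ℝ n).eval (1 / 2) / n.factorial) ^ 2

open MeasureTheory Set Real

/-- `(1/2)_n / n!` as a product of ratios of consecutive odd and even numbers. -/
theorem ascPochhammer_eval_half_div_factorial (n : ℕ) :
    (ascPochhammer ℝ n).eval (1 / 2) / n.factorial =
      ∏ i ∈ Finset.range n, (2 * (i : ℝ) + 1) / (2 * i + 2) := by
  induction n with
  | zero => simp
  | succ k ih =>
    rw [Finset.prod_range_succ, ← ih, ascPochhammer_succ_eval, Nat.factorial_succ]
    push_cast
    have : (k.factorial : ℝ) ≠ 0 := by positivity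
    field_simp
    ring

theorem ascPochhammer_eval_half_div_factorial_nonneg (n : ℕ) :
    0 ≤ (ascPochhammer ℝ n).eval (1 / 2) / n.factorial := by
  rw [ascPochhammer_eval_half_div_factorial]
  exact Finset.prod_nonneg fun i _ => by positivity

/-- The binomial series of `(1 - y)^(-1/2)`. -/
theorem hasSum_one_div_sqrt_one_sub {y : ℝ} (hy0 : 0 ≤ y) (hy1 : y < 1) :
    HasSum (fun n : ℕ => (ascPochhammer ℝ n).eval (1 / 2) / n.factorial * y ^ n)
      (1 / √(1 - y)) := by
  have hmem : y ∈ Metric.eball (0 : ℝ) 1 := by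
    rw [← ENNReal.ofReal_one, Metric.eball_ofReal]
    simpa [abs_of_nonneg hy0] using hy1
  have hc (n : ℕ) : Ring.choose ((1 / 2 : ℝ) + n - 1) n =
      (ascPochhammer ℝ n).eval (1 / 2) / n.factorial := by
    rw [eq_div_iff (by positivity), mul_comm, ← nsmul_eq_mul, Ring.choose,
      Ring.factorial_nsmul_multichoose_eq_ascPochhammer,
      Polynomial.ascPochhammer_smeval_eq_eval]
    congr 1
    ring
  have h := (one_div_one_sub_rpow_hasFPowerSeriesOnBall_zero (1 / 2)).hasSum hmem
  simpa only [zero_add, ← Real.sqrt_eq_rpow, FormalMultilinearSeries.ofScalars_apply_eq, hc,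
    smul_eq_mul] using h

/-- Legendre's complete elliptic integral of the first kind as a hypergeometric series. -/
theorem hasSum_integral_one_div_sqrt_one_sub_mul_cos_sq {s : ℝ} (hs0 : 0 ≤ s) (hs1 : s < 1) :
    HasSum (fun n : ℕ => π / 2 * (aCoef n * s ^ n))
      (∫ θ in (0 : ℝ)..π / 2, 1 / √(1 - s * cos θ ^ 2)) := by
  have hcos (θ : ℝ) : s * cos θ ^ 2 ≤ s :=
    mul_le_of_le_one_right hs0 (cos_sq_le_one θ)
  have h := intervalIntegral.hasSum_integral_of_dominated_convergence (μ := volume)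
    (a := 0) (b := π / 2)
    (F := fun n θ => (ascPochhammer ℝ n).eval (1 / 2) / n.factorial * (s * cos θ ^ 2) ^ n)
    (f := fun θ => 1 / √(1 - s * cos θ ^ 2))
    (fun n _ => (ascPochhammer ℝ n).eval (1 / 2) / n.factorial * s ^ n)
    (fun n => by fun_prop)
    (fun n => .of_forall fun θ _ => by
      have := ascPochhammer_eval_half_div_factorial_nonneg n
      have h0 : 0 ≤ s * cos θ ^ 2 := by positivity
      rw [norm_of_nonneg (mul_nonneg this (pow_nonneg h0 n))]
      gcongr
      exact hcos θ)
    (.of_forall fun θ _ => (hasSum_one_div_sqrt_one_sub hs0 hs1).summable)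
    (by simp)
    (.of_forall fun θ _ => hasSum_one_div_sqrt_one_sub (by positivity)
      ((hcos θ).trans_lt hs1))
  refine (congrArg (HasSum · _) (funext fun n => ?_)).mpr h
  simp_rw [mul_pow, ← pow_mul]
  rw [intervalIntegral.integral_const_mul, intervalIntegral.integral_const_mul,
    EulerSine.integral_cos_pow_eq, integral_sin_pow_even,
    ← ascPochhammer_eval_half_div_factorial, aCoef]
  ring

theorem injOn_one_sub_mul_cos_sq {s : ℝ} (hs : 0 < s) :
    InjOn (fun θ => 1 - s * cos θ ^ 2) (Ioo 0 (π / 2)) := by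
  intro a ha b hb hab
  have ha' := cos_pos_of_mem_Ioo ⟨by linarith [ha.1, pi_pos], ha.2⟩
  have hb' := cos_pos_of_mem_Ioo ⟨by linarith [hb.1, pi_pos], hb.2⟩
  have hsq : cos a ^ 2 = cos b ^ 2 := mul_left_cancel₀ hs.ne' (by simpa using hab)
  refine injOn_cos ⟨ha.1.le, ?_⟩ ⟨hb.1.le, ?_⟩ ((sq_eq_sq₀ ha'.le hb'.le).1 hsq)
  · linarith [ha.2, pi_pos]
  · linarith [hb.2, pi_pos]

theorem image_one_sub_mul_cos_sq {s : ℝ} (hs : 0 < s) :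
    (fun θ => 1 - s * cos θ ^ 2) '' Ioo 0 (π / 2) = Ioo (1 - s) 1 := by
  ext x
  constructor
  · rintro ⟨θ, hθ, rfl⟩
    have hc := cos_pos_of_mem_Ioo ⟨by linarith [hθ.1, pi_pos], hθ.2⟩
    have hsin := sin_pos_of_pos_of_lt_pi hθ.1 (by linarith [hθ.2, pi_pos])
    have := sin_sq_add_cos_sq θ
    have h1 : 0 < s * cos θ ^ 2 := by positivity
    have h2 : 0 < s * sin θ ^ 2 := by positivity
    constructor <;> simp only <;> nlinarith
  · rintro ⟨h1, h2⟩
    have hpos : 0 < (1 - x) / s := div_pos (by linarith) hs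
    have hlt : √((1 - x) / s) < 1 := by
      rw [sqrt_lt' one_pos, one_pow, div_lt_one hs]
      linarith
    have hsqrt := sqrt_pos.2 hpos
    refine ⟨arccos √((1 - x) / s), ⟨arccos_pos.2 hlt, arccos_lt_pi_div_two.2 hsqrt⟩, ?_⟩
    simp only
    rw [cos_arccos (by linarith) hlt.le, sq_sqrt hpos.le, mul_div_cancel₀ _ hs.ne']
    ring

/-- The pullback of `dx/√(x(1-x)(x-t))` along `x = 1 - (1-t) cos² θ`. -/
theorem abs_deriv_mul_one_div_sqrt {t θ : ℝ} (ht1 : t < 1) (hθ : θ ∈ Ioo 0 (π / 2)) :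
    |2 * (1 - t) * cos θ * sin θ| • (1 / √((1 - (1 - t) * cos θ ^ 2) *
      (1 - (1 - (1 - t) * cos θ ^ 2)) * ((1 - (1 - t) * cos θ ^ 2) - t))) =
      2 * (1 / √(1 - (1 - t) * cos θ ^ 2)) := by
  have hc := cos_pos_of_mem_Ioo ⟨by linarith [hθ.1, pi_pos], hθ.2⟩
  have hsin := sin_pos_of_pos_of_lt_pi hθ.1 (by linarith [hθ.2, pi_pos])
  have hs : 0 < 1 - t := by linarith
  have hfac : (1 - (1 - t) * cos θ ^ 2) * (1 - (1 - (1 - t) * cos θ ^ 2)) *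
      ((1 - (1 - t) * cos θ ^ 2) - t) =
      (1 - (1 - t) * cos θ ^ 2) * ((1 - t) * cos θ * sin θ) ^ 2 := by
    rw [mul_pow _ (sin θ), sin_sq]
    ring
  have hp : 0 < (1 - t) * cos θ * sin θ := by positivity
  rw [hfac, sqrt_mul' _ (sq_nonneg _), sqrt_sq hp.le, smul_eq_mul,
    abs_of_pos (by positivity)]
  field_simp

/-- for `0 < t < 1` the elliptic integral `∫_t^1 dx/√(x(1-x)(x-t))`
converges and equals `π·₂F₁(1/2,1/2,1;1-t) = π·∑ ((1/2)_n/n!)² (1-t)ⁿ`. -/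
theorem stmt_12 (t : ℝ) (ht0 : 0 < t) (ht1 : t < 1) :
    MeasureTheory.IntegrableOn
      (fun x : ℝ => 1 / Real.sqrt (x * (1 - x) * (x - t))) (Set.Ioo t 1) ∧
    (∫ x in Set.Ioo t (1 : ℝ), 1 / Real.sqrt (x * (1 - x) * (x - t)))
      = Real.pi * ∑' n : ℕ, aCoef n * (1 - t) ^ n := by
  have hs : 0 < 1 - t := by linarith
  have himg := image_one_sub_mul_cos_sq hs
  rw [sub_sub_cancel] at himg
  have hderiv : ∀ θ ∈ Ioo 0 (π / 2), HasDerivWithinAt (fun θ => 1 - (1 - t) * cos θ ^ 2)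
      (2 * (1 - t) * cos θ * sin θ) (Ioo 0 (π / 2)) θ := fun θ _ => by
    refine (((((hasDerivAt_cos θ).pow 2).const_mul (1 - t)).const_sub 1).congr_deriv
      ?_).hasDerivWithinAt
    norm_num
    ring
  have hcont : Continuous fun θ => 2 * (1 / √(1 - (1 - t) * cos θ ^ 2)) := by
    refine continuous_const.mul (continuous_const.div (by fun_prop) fun θ => ?_)
    refine (sqrt_pos.2 ?_).ne'
    nlinarith [cos_sq_le_one θ]
  rw [← himg]
  constructor
  · rw [integrableOn_image_iff_integrableOn_abs_deriv_smul measurableSet_Ioo hderiv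
      (injOn_one_sub_mul_cos_sq hs)]
    exact (hcont.integrableOn_Icc.mono_set Ioo_subset_Icc_self).congr_fun
      (fun θ hθ => (abs_deriv_mul_one_div_sqrt ht1 hθ).symm) measurableSet_Ioo
  · rw [integral_image_eq_integral_abs_deriv_smul measurableSet_Ioo hderiv
      (injOn_one_sub_mul_cos_sq hs),
      setIntegral_congr_fun measurableSet_Ioo fun θ hθ => abs_deriv_mul_one_div_sqrt ht1 hθ,
      ← integral_Ioc_eq_integral_Ioo, ← intervalIntegral.integral_of_le (by positivity),
      intervalIntegral.integral_const_mul,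
      ← (hasSum_integral_one_div_sqrt_one_sub_mul_cos_sq hs.le (by linarith)).tsum_eq,
      tsum_mul_left]
    ring
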